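/- Let G be a thick-leaved tree, i.e., a graph obtained from a tree T by a sequence of the following operations: choose a leaf v of T with neighbor v', replace v by a complete graph K, and replace the edge v'v by an edge between v' and one vertex of K. If B₁, …, B_k are the simplicial blocks of G, then gp_e(G) = Σ_{i=1}^{k} C(n(B_i), 2), where n(B_i) is the number of vertices of B_i and C(n,2) = n(n−1)/2. -/

import Mathlib

/-!
The only property of a thick-leaved tree `G` that matters is that `G` is connected and each of its
edges is a bridge or has a simplicial endpoint; every leaf replacement preserves it.

Let `X₀` be the set of edges with a simplicial endpoint. A simplicial vertex is never an interior
vertex of a geodesic, so a geodesic contains at most two edges of `X₀`, and `X₀` is an edge general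
position set. An edge of a simplicial block without a simplicial endpoint would be a bridge lying in
a triangle; hence `X₀` is the disjoint union of the edge sets of the simplicial blocks, and `|X₀|`
is the sum of the binomial coefficients `C(n(Bᵢ), 2)`.

For the upper bound let `X` be an edge general position set that is not contained in `X₀`, and pick
a bridge `xy ∈ X \ X₀`. Every geodesic that starts in `r` contains at most one edge of `X`, for
`r = x` or for `r = y`: otherwise two offending geodesics could be glued along `xy` to a geodesic
with three edges of `X`. Each `e ∈ X \ X₀` is a bridge, so there is a simplicial vertex `z` on the
side of `e` away from `r`: a vertex of that side at maximal distance from `e`. The last edge of a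
geodesic from `r` to `z` lies in `X₀`, and not in `X` because `e` lies on the same geodesic. As `e`
can be recovered from this last edge, `X \ X₀` injects into `X₀ \ X`.
-/

/-- `X` is an edge general position set of `G`: `X` consists of edges of `G` and every
shortest path of `G` contains at most two edges of `X`. -/
def SimpleGraph.IsEdgeGPSet {V : Type*} (G : SimpleGraph V) (X : Set (Sym2 V)) : Prop :=
  X ⊆ G.edgeSet ∧
    ∀ (u v : V) (p : G.Walk u v), p.IsPath → p.length = G.dist u v →
      (X ∩ {e | e ∈ p.edges}).ncard ≤ 2

/-- The edge general position number of `G`. -/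
noncomputable def SimpleGraph.egp {V : Type*} (G : SimpleGraph V) : ℕ :=
  sSup {n | ∃ X : Set (Sym2 V), G.IsEdgeGPSet X ∧ X.ncard = n}
/-- The graph obtained from `G` by replacing the vertex `v` (intended to be a leaf with
unique neighbour `v'`) by a complete graph on `n` vertices: `v` is removed, a clique
`Fin n` is added, and the edge `v'v` is replaced by an edge between `v'` (the vertices
adjacent to `v` in `G`) and one vertex of the clique. -/
def replaceLeaf {V : Type} (G : SimpleGraph V) (v : V) (n : ℕ) :
    SimpleGraph ({x : V // x ≠ v} ⊕ Fin n) :=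
  SimpleGraph.fromRel (fun a b =>
    match a, b with
    | Sum.inl x, Sum.inl y => G.Adj x.1 y.1
    | Sum.inl x, Sum.inr i => G.Adj x.1 v ∧ i.1 = 0
    | Sum.inr _, Sum.inr _ => True
    | _, _ => False)

/-- A graph bundled with its vertex type. -/
structure GraphOn : Type 1 where
  carrier : Type
  graph : SimpleGraph carrier

/-- One step of the thick-leaved-tree construction: choose a leaf `v` of the current
graph and replace it by a (nonempty) complete graph as in `replaceLeaf`. -/
def TLStep (A B : GraphOn) : Prop :=
  ∃ v : A.carrier, (A.graph.neighborSet v).ncard = 1 ∧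
    ∃ n : ℕ, 1 ≤ n ∧ Nonempty (B.graph ≃g replaceLeaf A.graph v n)

/-- `G` is a thick-leaved tree: it is obtained from a (finite) tree by a sequence of
leaf-replacement operations. -/
def IsThickLeavedTree {V : Type} (G : SimpleGraph V) : Prop :=
  ∃ (U : Type) (_ : Fintype U) (T : SimpleGraph U), T.IsTree ∧
    Relation.ReflTransGen TLStep ⟨U, T⟩ ⟨V, G⟩

/-- A vertex is simplicial if its neighbourhood induces a complete subgraph. -/
def SimpleGraph.IsSimplicialVertex {V : Type} (G : SimpleGraph V) (v : V) : Prop :=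
  G.IsClique (G.neighborSet v)

/-- The simplicial blocks of a block graph `G`, viewed as vertex sets.  In a block graph
the blocks are precisely the maximal cliques, and a block is simplicial if it contains a
simplicial vertex. -/
def simplicialBlocks {V : Type} (G : SimpleGraph V) : Set (Set V) :=
  {B | Maximal (fun s => G.IsClique s) B ∧ ∃ v ∈ B, G.IsSimplicialVertex v}

namespace ThickLeaved

open SimpleGraph

section Bridge

variable {V W : Type*} {G : SimpleGraph V} {H : SimpleGraph W} {x y : V} {S : Set V}

/-- `S` contains `x` but not `y`, and `xy` is the only edge of `G` that may leave `S`. Such an `S`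
exists exactly when `xy` is a bridge (`isBridge_iff_exists_isCutSide`). -/
structure IsCutSide (G : SimpleGraph V) (x y : V) (S : Set V) : Prop where
  left_mem : x ∈ S
  right_notMem : y ∉ S
  eq_of_adj : ∀ ⦃a⦄, a ∈ S → ∀ ⦃b⦄, b ∉ S → G.Adj a b → a = x ∧ b = y

namespace IsCutSide

lemma compl (hS : IsCutSide G x y S) : IsCutSide G y x Sᶜ where
  left_mem := hS.right_notMem
  right_notMem := not_not_intro hS.left_mem
  eq_of_adj _ ha _ hb hab := (hS.eq_of_adj (not_not.1 hb) ha hab.symm).symm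

lemma mem_edges (hS : IsCutSide G x y S) {a b : V} (ha : a ∈ S) (hb : b ∉ S) (p : G.Walk a b) :
    s(x, y) ∈ p.edges := by
  obtain ⟨d, hd, hfst, hsnd⟩ := p.exists_boundary_dart S ha hb
  obtain ⟨rfl, rfl⟩ := hS.eq_of_adj hfst hsnd d.adj
  exact List.mem_map_of_mem hd

lemma adj (hG : G.Connected) (hS : IsCutSide G x y S) : G.Adj x y := by
  obtain ⟨p⟩ := hG.preconnected x y
  exact p.adj_of_mem_edges (hS.mem_edges hS.left_mem hS.right_notMem p)

lemma dist_add_le_length (hG : G.Connected) (hS : IsCutSide G x y S) {a b : V} (ha : a ∈ S)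
    (hb : b ∉ S) (p : G.Walk a b) : G.dist a x + 1 + G.dist y b ≤ p.length := by
  induction p with
  | nil => exact absurd ha hb
  | @cons a c b hac p ih =>
    rw [Walk.length_cons]
    by_cases hc : c ∈ S
    · have := hG.dist_triangle (u := a) (v := c) (w := x)
      have := dist_eq_one_iff_adj.2 hac
      have := ih hc hb
      omega
    · obtain ⟨rfl, rfl⟩ := hS.eq_of_adj ha hc hac
      have := dist_le p
      rw [dist_self]
      omega

lemma dist_eq (hG : G.Connected) (hS : IsCutSide G x y S) {a b : V} (ha : a ∈ S) (hb : b ∉ S) :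
    G.dist a b = G.dist a x + 1 + G.dist y b := by
  apply le_antisymm
  · calc G.dist a b ≤ G.dist a x + G.dist x b := hG.dist_triangle
      _ ≤ G.dist a x + (G.dist x y + G.dist y b) := by gcongr; exact hG.dist_triangle
      _ = G.dist a x + 1 + G.dist y b := by
        rw [dist_eq_one_iff_adj.2 (hS.adj hG), add_assoc]
  · obtain ⟨p, hp⟩ := hG.exists_walk_length_eq_dist a b
    exact hp ▸ hS.dist_add_le_length hG ha hb p

lemma dist_right (hG : G.Connected) (hS : IsCutSide G x y S) {a : V} (ha : a ∈ S) :
    G.dist y a = G.dist x a + 1 := by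
  rw [dist_comm, hS.dist_eq hG ha hS.right_notMem, dist_self, add_zero, dist_comm]

lemma preimage {f : W → V} (hf : ∀ a b, H.Adj a b → f a ≠ f b → G.Adj (f a) (f b)) {x y : W}
    (hx : ∀ a, f a = f x → a = x) (hy : ∀ b, f b = f y → b = y)
    (hS : IsCutSide G (f x) (f y) S) : IsCutSide H x y (f ⁻¹' S) where
  left_mem := hS.left_mem
  right_notMem := hS.right_notMem
  eq_of_adj a ha b hb hab :=
    have hne : f a ≠ f b := fun h => hb (h ▸ ha : f b ∈ S)
    (hS.eq_of_adj ha hb (hf a b hab hne)).imp (hx a) (hy b)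

end IsCutSide

lemma isBridge_iff_exists_isCutSide : G.IsBridge s(x, y) ↔ ∃ S, IsCutSide G x y S := by
  refine ⟨fun h => ⟨{v | (G.deleteEdges {s(x, y)}).Reachable x v}, .refl x, h, ?_⟩, ?_⟩
  · intro a ha b hb hab
    by_cases he : s(a, b) = s(x, y)
    · rcases Sym2.eq_iff.1 he with h' | ⟨rfl, rfl⟩
      · exact h'
      · exact absurd ha h
    · exact absurd (ha.trans (Adj.reachable (deleteEdges_adj.2 ⟨hab, he⟩))) hb
  · rintro ⟨S, hS⟩
    exact isBridge_iff_forall_walk_mem_edges.2 (hS.mem_edges hS.left_mem hS.right_notMem)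

lemma isBridge_of_map {f : W → V} (hf : ∀ a b, H.Adj a b → f a ≠ f b → G.Adj (f a) (f b)) {x y : W}
    (hx : ∀ a, f a = f x → a = x) (hy : ∀ b, f b = f y → b = y)
    (h : G.IsBridge s(f x, f y)) : H.IsBridge s(x, y) := by
  obtain ⟨S, hS⟩ := isBridge_iff_exists_isCutSide.1 h
  exact isBridge_iff_exists_isCutSide.2 ⟨_, hS.preimage hf hx hy⟩

end Bridge

lemma exists_adj_dist_eq_add_one {V : Type*} {G : SimpleGraph V} (hG : G.Connected) {u v : V}
    (huv : u ≠ v) : ∃ w, G.Adj w v ∧ G.dist u v = G.dist u w + 1 := by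
  obtain ⟨p, hp⟩ := hG.exists_walk_length_eq_dist v u
  cases p with
  | nil => exact absurd rfl huv
  | @cons _ w _ h q =>
    refine ⟨w, h.symm, ?_⟩
    have := dist_le q
    have := hG.dist_triangle (u := u) (v := w) (w := v)
    have := dist_eq_one_iff_adj.2 h.symm
    rw [Walk.length_cons, dist_comm] at hp
    rw [dist_comm (v := u)] at *
    omega

section Simplicial

variable {V : Type} {G : SimpleGraph V}

lemma isSimplicialVertex_of_iso {W : Type} {H : SimpleGraph W} (f : G ≃g H) {x : V}
    (hx : H.IsSimplicialVertex (f x)) : G.IsSimplicialVertex x := fun _ ha _ hb hab =>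
  f.map_adj_iff.1 (hx (f.map_adj_iff.2 ha) (f.map_adj_iff.2 hb) (f.injective.ne hab))

lemma isClique_insert_neighborSet {s : V} (hs : G.IsSimplicialVertex s) :
    G.IsClique (insert s (G.neighborSet s)) :=
  hs.insert fun _ hb _ => hb

lemma dist_le_of_adj_of_isSimplicialVertex (hG : G.Connected) {u s z : V}
    (hs : G.IsSimplicialVertex s) (hus : u ≠ s) (hsz : G.Adj s z) : G.dist u z ≤ G.dist u s := by
  obtain ⟨w, hws, hw⟩ := exists_adj_dist_eq_add_one hG hus
  have hwz : G.dist w z ≤ 1 := by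
    rcases eq_or_ne w z with rfl | hne
    · simp
    · exact (dist_eq_one_iff_adj.2 (hs hws.symm hsz hne)).le
  calc G.dist u z ≤ G.dist u w + G.dist w z := hG.dist_triangle
    _ ≤ G.dist u s := by omega

lemma eq_or_eq_of_isSimplicialVertex_of_mem_support (hG : G.Connected) {u v s : V}
    (hs : G.IsSimplicialVertex s) {p : G.Walk u v} (hp : p.length = G.dist u v)
    (hsp : s ∈ p.support) : s = u ∨ s = v := by
  classical
  by_contra! hne
  obtain ⟨z, hzs, hz⟩ := exists_adj_dist_eq_add_one hG hne.2.symm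
  have := dist_le_of_adj_of_isSimplicialVertex hG hs hne.1.symm hzs.symm
  have := hG.dist_triangle (u := u) (v := z) (w := v)
  have := dist_le (p.takeUntil s hsp)
  have := dist_le (p.dropUntil s hsp)
  have := congrArg Walk.length (p.take_spec hsp)
  rw [Walk.length_append] at this
  rw [dist_comm (u := v), dist_comm (u := v)] at hz
  omega

/-- The set of edges with a simplicial endpoint: the extremal edge general position set. -/
def simplicialEdges (G : SimpleGraph V) : Set (Sym2 V) :=
  {e | e ∈ G.edgeSet ∧ ∃ s ∈ e, G.IsSimplicialVertex s}

lemma isEdgeGPSet_simplicialEdges (hG : G.Connected) : G.IsEdgeGPSet (simplicialEdges G) := by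
  refine ⟨fun e he => he.1, fun u v p hpath hp => ?_⟩
  have first_or_last : simplicialEdges G ∩ {e | e ∈ p.edges} ⊆
      {s(u, p.snd), s(v, p.penultimate)} := by
    rintro e ⟨⟨-, s, ⟨t, rfl⟩, hs⟩, he⟩
    rcases eq_or_eq_of_isSimplicialVertex_of_mem_support hG hs hp
      (p.fst_mem_support_of_mem_edges he) with rfl | rfl
    · exact .inl (by rw [hpath.eq_snd_of_mem_edges he])
    · exact .inr (by rw [hpath.eq_penultimate_of_mem_edges he]; rfl)
  calc _ ≤ Set.ncard {s(u, p.snd), s(v, p.penultimate)} := Set.ncard_le_ncard first_or_last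
    _ ≤ 2 := (Set.ncard_insert_le _ _).trans (by rw [Set.ncard_singleton])

end Simplicial

/-- `G` is connected and every edge without a simplicial endpoint is a bridge; equivalently, every
block of `G` with more than two vertices is complete and has at most one cut vertex. This is the
only property of thick-leaved trees that matters for `egp`. -/
structure IsThickLeaved {V : Type} (G : SimpleGraph V) : Prop where
  connected : G.Connected
  isBridge : ∀ ⦃x y⦄, G.Adj x y → ¬ G.IsSimplicialVertex x → ¬ G.IsSimplicialVertex y →
    G.IsBridge s(x, y)

section ReplaceLeaf

variable {V : Type} {G : SimpleGraph V} {v : V} {n : ℕ}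

lemma replaceLeaf_adj_inl_inl {x y : {x : V // x ≠ v}} :
    (replaceLeaf G v n).Adj (.inl x) (.inl y) ↔ G.Adj x y := by
  simp only [replaceLeaf, fromRel_adj, G.adj_comm y, or_self, ne_eq, Sum.inl.injEq,
    and_iff_right_iff_imp]
  exact fun h hxy => h.ne (congrArg _ hxy)

lemma replaceLeaf_adj_inl_inr {x : {x : V // x ≠ v}} {i : Fin n} :
    (replaceLeaf G v n).Adj (.inl x) (.inr i) ↔ G.Adj x v ∧ i.1 = 0 := by
  simp [replaceLeaf]

lemma replaceLeaf_adj_inr_inl {x : {x : V // x ≠ v}} {i : Fin n} :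
    (replaceLeaf G v n).Adj (.inr i) (.inl x) ↔ G.Adj x v ∧ i.1 = 0 := by
  rw [adj_comm, replaceLeaf_adj_inl_inr]

lemma replaceLeaf_adj_inr_inr {i j : Fin n} :
    (replaceLeaf G v n).Adj (.inr i) (.inr j) ↔ i ≠ j := by
  simp [replaceLeaf]

/-- The map that contracts the new clique of `replaceLeaf G v n` to the vertex `v` it replaces. -/
def contractClique (v : V) (n : ℕ) : {x : V // x ≠ v} ⊕ Fin n → V :=
  Sum.elim Subtype.val fun _ => v

lemma contractClique_adj :
    ∀ a b, (replaceLeaf G v n).Adj a b → contractClique v n a ≠ contractClique v n b →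
      G.Adj (contractClique v n a) (contractClique v n b)
  | .inl _, .inl _, h, _ => replaceLeaf_adj_inl_inl.1 h
  | .inl _, .inr _, h, _ => (replaceLeaf_adj_inl_inr.1 h).1
  | .inr _, .inl _, h, _ => (replaceLeaf_adj_inr_inl.1 h).1.symm
  | .inr _, .inr _, _, hne => absurd rfl hne

lemma eq_inl_of_contractClique_eq (x : {x : V // x ≠ v}) :
    ∀ a, contractClique v n a = x → a = .inl x
  | .inl _, h => congrArg _ (Subtype.ext h)
  | .inr _, h => absurd h.symm x.2

lemma replaceLeaf_connected [NeZero n] (hG : G.Connected) : (replaceLeaf G v n).Connected := by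
  classical
  let f : G →g replaceLeaf G v n :=
    { toFun := fun x => if hx : x = v then .inr 0 else .inl ⟨x, hx⟩
      map_rel' := fun {x y} hxy => by
        by_cases hx : x = v <;> by_cases hy : y = v
        · exact absurd (hx.trans hy.symm) hxy.ne
        · simpa [hx, hy, replaceLeaf_adj_inr_inl] using hx ▸ hxy.symm
        · simpa [hx, hy, replaceLeaf_adj_inl_inr] using hy ▸ hxy
        · simpa [hx, hy, replaceLeaf_adj_inl_inl] using hxy }
  have hfv : f v = .inr 0 := dif_pos rfl
  rw [connected_iff_exists_forall_reachable]
  refine ⟨f v, ?_⟩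
  rintro (⟨x, hx⟩ | i)
  · have hfx : f x = .inl ⟨x, hx⟩ := dif_neg hx
    exact hfx ▸ (hG.preconnected v x).map f
  · rw [hfv]
    rcases eq_or_ne 0 i with rfl | hi
    · rfl
    · exact (replaceLeaf_adj_inr_inr.2 hi).reachable

lemma isSimplicialVertex_replaceLeaf_inr {i : Fin n} (hi : i.1 ≠ 0) :
    (replaceLeaf G v n).IsSimplicialVertex (.inr i) := by
  rintro (a | a) ha (b | b) hb hab
  · exact absurd (replaceLeaf_adj_inr_inl.1 ha).2 hi
  · exact absurd (replaceLeaf_adj_inr_inl.1 ha).2 hi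
  · exact absurd (replaceLeaf_adj_inr_inl.1 hb).2 hi
  · exact replaceLeaf_adj_inr_inr.2 fun h => hab (congrArg _ h)

lemma isSimplicialVertex_replaceLeaf_inl {x : {x : V // x ≠ v}} (hxv : ¬ G.Adj x v)
    (hx : G.IsSimplicialVertex x) : (replaceLeaf G v n).IsSimplicialVertex (.inl x) := by
  rintro (a | a) ha (b | b) hb hab
  · exact replaceLeaf_adj_inl_inl.2 (hx (replaceLeaf_adj_inl_inl.1 ha)
      (replaceLeaf_adj_inl_inl.1 hb) fun h => hab (congrArg _ (Subtype.ext h)))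
  · exact absurd (replaceLeaf_adj_inl_inr.1 hb).1 hxv
  · exact absurd (replaceLeaf_adj_inl_inr.1 ha).1 hxv
  · exact absurd (replaceLeaf_adj_inl_inr.1 ha).1 hxv

lemma isSimplicialVertex_replaceLeaf_inl_of_adj (hv : (G.neighborSet v).Subsingleton)
    {x y : {x : V // x ≠ v}} (hxy : G.Adj x y) (hx : G.IsSimplicialVertex x) :
    (replaceLeaf G v n).IsSimplicialVertex (.inl x) := by
  refine isSimplicialVertex_replaceLeaf_inl (fun hxv => ?_) hx
  have hyv : G.Adj y v := hx hxy hxv y.2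
  exact hxy.ne (hv hxv.symm hyv.symm)

lemma isBridge_replaceLeaf_inl_inr (hv : (G.neighborSet v).Subsingleton) {x : {x : V // x ≠ v}}
    {i : Fin n} (hxi : (replaceLeaf G v n).Adj (.inl x) (.inr i)) :
    (replaceLeaf G v n).IsBridge s(.inl x, .inr i) := by
  refine isBridge_iff_exists_isCutSide.2 ⟨Set.range .inl, ⟨x, rfl⟩, by simp, ?_⟩
  rintro _ ⟨a, rfl⟩ (b | b) hb hab
  · exact absurd ⟨b, rfl⟩ hb
  · rw [replaceLeaf_adj_inl_inr] at hxi hab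
    exact ⟨congrArg _ (Subtype.ext (hv hab.1.symm hxi.1.symm)),
      congrArg _ (Fin.ext (hab.2.trans hxi.2.symm))⟩

end ReplaceLeaf

namespace IsThickLeaved

variable {V : Type} {G : SimpleGraph V}

lemma of_isTree (hG : G.IsTree) : IsThickLeaved G where
  connected := hG.connected
  isBridge _ _ hxy _ _ := isAcyclic_iff_forall_adj_isBridge.1 hG.isAcyclic hxy

lemma of_iso {W : Type} {H : SimpleGraph W} (f : G ≃g H) (hH : IsThickLeaved H) :
    IsThickLeaved G where
  connected := f.connected_iff.2 hH.connected
  isBridge _ _ hxy hx hy :=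
    isBridge_of_map (fun _ _ hab _ => f.map_adj_iff.2 hab) (fun _ h => f.injective h)
      (fun _ h => f.injective h) <|
      hH.isBridge (f.map_adj_iff.2 hxy) (mt (isSimplicialVertex_of_iso f) hx)
        (mt (isSimplicialVertex_of_iso f) hy)

lemma replaceLeaf (hG : IsThickLeaved G) {v : V} (hv : (G.neighborSet v).Subsingleton) {n : ℕ}
    [NeZero n] : IsThickLeaved (replaceLeaf G v n) where
  connected := replaceLeaf_connected hG.connected
  isBridge
    | .inl x, .inl y, hxy, hx, hy => by
      rw [replaceLeaf_adj_inl_inl] at hxy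
      exact isBridge_of_map contractClique_adj (eq_inl_of_contractClique_eq x)
        (eq_inl_of_contractClique_eq y) <|
        hG.isBridge hxy (mt (isSimplicialVertex_replaceLeaf_inl_of_adj hv hxy) hx)
          (mt (isSimplicialVertex_replaceLeaf_inl_of_adj hv hxy.symm) hy)
    | .inl _, .inr _, hxy, _, _ => isBridge_replaceLeaf_inl_inr hv hxy
    | .inr _, .inl _, hxy, _, _ => Sym2.eq_swap ▸ isBridge_replaceLeaf_inl_inr hv hxy.symm
    | .inr i, .inr j, hij, hi, hj => by
      have hi0 := not_imp_comm.1 isSimplicialVertex_replaceLeaf_inr hi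
      have hj0 := not_imp_comm.1 isSimplicialVertex_replaceLeaf_inr hj
      exact absurd (Fin.ext (hi0.trans hj0.symm)) (replaceLeaf_adj_inr_inr.1 hij)

lemma of_tlStep {A B : GraphOn} (hAB : TLStep A B) (hA : IsThickLeaved A.graph) :
    IsThickLeaved B.graph := by
  obtain ⟨v, hv, n, hn, ⟨f⟩⟩ := hAB
  have : NeZero n := ⟨by omega⟩
  have hleaf : (A.graph.neighborSet v).Subsingleton := by
    obtain ⟨v', hv'⟩ := Set.ncard_eq_one.1 hv
    exact hv' ▸ Set.subsingleton_singleton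
  exact (hA.replaceLeaf hleaf).of_iso f

end IsThickLeaved

lemma _root_.IsThickLeavedTree.isThickLeaved {V : Type} {G : SimpleGraph V}
    (hG : IsThickLeavedTree G) : IsThickLeaved G := by
  obtain ⟨U, _, T, hT, hTG⟩ := hG
  have : ∀ B : GraphOn, Relation.ReflTransGen TLStep ⟨U, T⟩ B → IsThickLeaved B.graph := by
    intro B hB
    induction hB with
    | refl => exact .of_isTree hT
    | tail _ hstep ih => exact .of_tlStep hstep ih
  exact this ⟨V, G⟩ hTG

section SimplicialBlocks

/-- The set of unordered pairs of distinct vertices of `B`: the edge set of the complete graph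
on `B`. -/
def pairsIn {V : Type*} (B : Set V) : Set (Sym2 V) :=
  Sym2.map (↑) '' (Sym2.diagSetᶜ : Set (Sym2 B))

lemma mk_mem_pairsIn {V : Type*} {B : Set V} {x y : V} :
    s(x, y) ∈ pairsIn B ↔ x ∈ B ∧ y ∈ B ∧ x ≠ y := by
  constructor
  · rintro ⟨e, he, hxy⟩
    induction e using Sym2.ind with
    | _ a b =>
      have hab : (a : V) ≠ b := Subtype.coe_injective.ne he
      rcases Sym2.eq_iff.1 hxy with ⟨rfl, rfl⟩ | ⟨rfl, rfl⟩
      · exact ⟨a.2, b.2, hab⟩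
      · exact ⟨b.2, a.2, hab.symm⟩
  · rintro ⟨hx, hy, hxy⟩
    exact ⟨s(⟨x, hx⟩, ⟨y, hy⟩), fun h => hxy (congrArg Subtype.val h), rfl⟩

lemma ncard_pairsIn {V : Type*} (B : Set V) : (pairsIn B).ncard = B.ncard.choose 2 := by
  rw [pairsIn, Set.ncard_image_of_injective _ (Sym2.map.injective Subtype.coe_injective),
    Sym2.ncard_diagSet_compl, Nat.card_coe_set_eq]

variable {V : Type} {G : SimpleGraph V} {B C : Set V}

lemma subset_insert_neighborSet_of_isClique {v : V} (hB : G.IsClique B) (hv : v ∈ B) :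
    B ⊆ insert v (G.neighborSet v) := fun _ hb =>
  or_iff_not_imp_left.2 fun hbv => hB hv hb (Ne.symm hbv)

lemma insert_neighborSet_mem_simplicialBlocks {s : V} (hs : G.IsSimplicialVertex s) :
    insert s (G.neighborSet s) ∈ simplicialBlocks G :=
  ⟨⟨isClique_insert_neighborSet hs, fun _ hC hsC =>
    subset_insert_neighborSet_of_isClique hC (hsC (Set.mem_insert _ _))⟩, s, Set.mem_insert _ _, hs⟩

lemma eq_insert_neighborSet_of_mem_simplicialBlocks (hB : B ∈ simplicialBlocks G) {s : V}
    (hsB : s ∈ B) (hs : G.IsSimplicialVertex s) : B = insert s (G.neighborSet s) :=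
  hB.1.eq_of_subset (isClique_insert_neighborSet hs)
    (subset_insert_neighborSet_of_isClique hB.1.1 hsB)

lemma IsCutSide.not_adj_of_adj {x y s : V} {S : Set V} (hS : IsCutSide G x y S)
    (hsx : G.Adj s x) : ¬ G.Adj s y := fun hsy => by
  by_cases hs : s ∈ S
  · exact hsx.ne (hS.eq_of_adj hs hS.right_notMem hsy).1
  · exact hsy.ne (hS.eq_of_adj hS.left_mem hs hsx.symm).2

/-- Otherwise `xy` would be a bridge in a triangle. -/
lemma IsThickLeaved.exists_isSimplicialVertex_mem (hG : IsThickLeaved G)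
    (hB : B ∈ simplicialBlocks G) {x y : V} (hxy : s(x, y) ∈ pairsIn B) :
    ∃ s ∈ s(x, y), s ∈ B ∧ G.IsSimplicialVertex s := by
  obtain ⟨hx, hy, hne⟩ := mk_mem_pairsIn.1 hxy
  by_contra! hns
  have hxs := hns x (Sym2.mem_mk_left x y) hx
  have hys := hns y (Sym2.mem_mk_right x y) hy
  obtain ⟨⟨hclique, -⟩, s, hsB, hs⟩ := hB
  obtain ⟨S, hS⟩ := isBridge_iff_exists_isCutSide.1 (hG.isBridge (hclique hx hy hne) hxs hys)
  have hsx : s ≠ x := fun h => hxs (h ▸ hs)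
  have hsy : s ≠ y := fun h => hys (h ▸ hs)
  exact hS.not_adj_of_adj (hclique hsB hx hsx) (hclique hsB hy hsy)

lemma IsThickLeaved.simplicialEdges_eq_biUnion_pairsIn (hG : IsThickLeaved G) :
    simplicialEdges G = ⋃ B ∈ simplicialBlocks G, pairsIn B := by
  ext e
  induction e using Sym2.ind with
  | _ x y =>
    rw [Set.mem_iUnion₂]
    constructor
    · rintro ⟨hxy : G.Adj x y, s, hsxy, hs⟩
      refine ⟨_, insert_neighborSet_mem_simplicialBlocks hs, mk_mem_pairsIn.2 ?_⟩
      rcases Sym2.mem_iff.1 hsxy with rfl | rfl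
      · exact ⟨.inl rfl, .inr hxy, hxy.ne⟩
      · exact ⟨.inr hxy.symm, .inl rfl, hxy.ne⟩
    · rintro ⟨B, hB, hxy⟩
      obtain ⟨hx, hy, hne⟩ := mk_mem_pairsIn.1 hxy
      obtain ⟨s, hsxy, -, hs⟩ := hG.exists_isSimplicialVertex_mem hB hxy
      exact ⟨hB.1.1 hx hy hne, s, hsxy, hs⟩

lemma IsThickLeaved.pairwiseDisjoint_pairsIn (hG : IsThickLeaved G) :
    (simplicialBlocks G).PairwiseDisjoint pairsIn := by
  refine fun B hB C hC hBC => Set.disjoint_left.2 fun e => ?_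
  induction e using Sym2.ind with
  | _ x y =>
    intro hxyB hxyC
    obtain ⟨s, hsxy, hsB, hs⟩ := hG.exists_isSimplicialVertex_mem hB hxyB
    have hsC : s ∈ C := by
      obtain ⟨hx, hy, -⟩ := mk_mem_pairsIn.1 hxyC
      rcases Sym2.mem_iff.1 hsxy with rfl | rfl <;> assumption
    exact hBC <| (eq_insert_neighborSet_of_mem_simplicialBlocks hB hsB hs).trans
      (eq_insert_neighborSet_of_mem_simplicialBlocks hC hsC hs).symm

lemma IsThickLeaved.ncard_simplicialEdges [Finite V] (hG : IsThickLeaved G) :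
    (simplicialEdges G).ncard = ∑ᶠ B ∈ simplicialBlocks G, B.ncard.choose 2 := by
  rw [hG.simplicialEdges_eq_biUnion_pairsIn, Set.Finite.ncard_biUnion (Set.toFinite _)
    (fun _ _ => Set.toFinite _) hG.pairwiseDisjoint_pairsIn]
  simp only [ncard_pairsIn]

end SimplicialBlocks

section SparseRoot

variable {V : Type*} {G : SimpleGraph V} {X : Set (Sym2 V)} {x y : V} {S : Set V}

/-- Every shortest path of `G` starting in `r` contains at most one edge of `X`. -/
def IsSparseRoot (G : SimpleGraph V) (X : Set (Sym2 V)) (r : V) : Prop :=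
  ∀ ⦃v⦄ (p : G.Walk r v), p.length = G.dist r v → (X ∩ {e | e ∈ p.edges}).Subsingleton

open Classical in
lemma ncard_inter_edges_eq_countP {u v : V} {p : G.Walk u v} (hp : p.IsTrail) :
    (X ∩ {e | e ∈ p.edges}).ncard = p.edges.countP (· ∈ X) := by
  have : X ∩ {e | e ∈ p.edges} = (p.edges.filter (· ∈ X)).toFinset := by
    ext e
    simp [and_comm]
  rw [this, Set.ncard_coe_finset, List.toFinset_card_of_nodup (hp.edges_nodup.filter _),
    List.countP_eq_length_filter]

open Classical in
lemma countP_edges_le_two (hX : G.IsEdgeGPSet X) {u v : V} {p : G.Walk u v}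
    (hp : p.length = G.dist u v) : p.edges.countP (· ∈ X) ≤ 2 := by
  have hpath := p.isPath_of_length_eq_dist hp
  exact ncard_inter_edges_eq_countP hpath.isTrail ▸ hX.2 u v p hpath hp

open Classical in
lemma exists_two_le_countP_of_not_isSparseRoot {r : V} (hr : ¬ IsSparseRoot G X r) :
    ∃ v, ∃ p : G.Walk r v, p.length = G.dist r v ∧ 2 ≤ p.edges.countP (· ∈ X) := by
  simp only [IsSparseRoot, not_forall] at hr
  obtain ⟨v, p, hp, hns⟩ := hr
  refine ⟨v, p, hp, ?_⟩
  rw [← ncard_inter_edges_eq_countP (p.isPath_of_length_eq_dist hp).isTrail]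
  have : Finite ↑(X ∩ {e | e ∈ p.edges}) := p.edges.finite_toSet.inter_of_right X
  exact Set.one_lt_ncard_iff_nontrivial.2 (Set.not_subsingleton_iff.1 hns)

open Classical in
/-- A geodesic from `x` with two edges of `X` starts with the edge `xy`: otherwise `yx` could be
put in front of it. -/
lemma IsCutSide.exists_geodesic_of_not_isSparseRoot (hG : G.Connected) (hX : G.IsEdgeGPSet X)
    (hS : IsCutSide G x y S) (hxy : s(x, y) ∈ X) (hx : ¬ IsSparseRoot G X x) :
    ∃ v ∉ S, ∃ p : G.Walk y v, p.length = G.dist y v ∧ 1 ≤ p.edges.countP (· ∈ X) := by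
  obtain ⟨v, p, hp, hcount⟩ := exists_two_le_countP_of_not_isSparseRoot hx
  have hv : v ∉ S := fun hv => by
    have h3 := countP_edges_le_two hX (p := .cons (hS.adj hG).symm p) <| by
      rw [Walk.length_cons, hp, hS.dist_right hG hv]
    rw [Walk.edges_cons, List.countP_cons_of_pos (by simpa [Sym2.eq_swap] using hxy)] at h3
    omega
  refine ⟨v, hv, ?_⟩
  have hxv := hS.dist_eq hG hS.left_mem hv
  cases p with
  | nil => exact absurd hS.left_mem hv
  | @cons _ b _ hb q =>
    have := dist_le q
    rw [dist_self] at hxv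
    rw [Walk.length_cons] at hp
    have hbS : b ∉ S := fun hbS => by
      have := hS.dist_eq hG hbS hv
      omega
    obtain rfl : b = y := (hS.eq_of_adj hS.left_mem hbS hb).2
    rw [Walk.edges_cons, List.countP_cons_of_pos (by simpa using hxy)] at hcount
    exact ⟨q, by omega, by omega⟩

lemma IsCutSide.exists_isSparseRoot (hG : G.Connected) (hX : G.IsEdgeGPSet X)
    (hS : IsCutSide G x y S) (hxy : s(x, y) ∈ X) : ∃ r, IsSparseRoot G X r := by
  classical
  by_contra! h
  obtain ⟨v, hv, p, hp, hpX⟩ := hS.exists_geodesic_of_not_isSparseRoot hG hX hxy (h x)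
  obtain ⟨u, hu, q, hq, hqX⟩ :=
    hS.compl.exists_geodesic_of_not_isSparseRoot hG hX (Sym2.eq_swap ▸ hxy) (h y)
  let glued : G.Walk u v := q.reverse.append (.cons (hS.adj hG) p)
  have hlen : glued.length = G.dist u v := by
    rw [hS.dist_eq hG (not_not.1 hu) hv, Walk.length_append, Walk.length_reverse,
      Walk.length_cons, hp, hq, dist_comm (u := x)]
    omega
  have hle := countP_edges_le_two hX hlen
  rw [Walk.edges_append, Walk.edges_reverse, Walk.edges_cons, List.countP_append,
    List.countP_reverse, List.countP_cons_of_pos (by simpa using hxy)] at hle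
  omega

end SparseRoot

section UpperBound

variable {V : Type} {G : SimpleGraph V} {X : Set (Sym2 V)} {S : Set V} {r x y z : V}

lemma IsThickLeaved.isSimplicialVertex_of_forall_adj_dist_le (hG : IsThickLeaved G)
    (hmax : ∀ u, G.Adj z u → G.dist r u ≤ G.dist r z) : G.IsSimplicialVertex z := by
  rcases eq_or_ne r z with rfl | hrz
  · exact fun a ha => absurd (hmax a ha) (by simp [dist_eq_one_iff_adj.2 ha])
  obtain ⟨w, hwz, hw⟩ := exists_adj_dist_eq_add_one hG.connected hrz
  by_cases hws : G.IsSimplicialVertex w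
  · obtain rfl : r = w := by
      by_contra hrw
      have := dist_le_of_adj_of_isSimplicialVertex hG.connected hws hrw hwz
      omega
    refine (isClique_insert_neighborSet hws).subset fun u hu => ?_
    by_contra! hur
    have := hG.connected.one_lt_dist_of_ne_of_not_adj (fun h => hur (.inl h.symm))
      (fun h => hur (.inr h))
    have := hmax u hu
    rw [dist_self] at hw
    omega
  · by_contra hz
    obtain ⟨S, hS⟩ := isBridge_iff_exists_isCutSide.1 (hG.isBridge hwz hws hz)
    have hr : r ∈ S := by
      by_contra hr
      have := hS.compl.dist_eq hG.connected hr (not_not_intro hS.left_mem)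
      rw [dist_self] at this
      omega
    have neighbor_eq : ∀ u, G.Adj z u → u = w := fun u hzu => by
      by_contra huw
      have huS : u ∉ S := fun hu => huw (hS.eq_of_adj hu hS.right_notMem hzu.symm).1
      have := hS.dist_eq hG.connected hr huS
      have := dist_eq_one_iff_adj.2 hzu
      have := hmax u hzu
      omega
    exact hz fun a ha b hb hab => absurd ((neighbor_eq a ha).trans (neighbor_eq b hb).symm) hab

lemma IsThickLeaved.exists_isSimplicialVertex_notMem [Finite V] (hG : IsThickLeaved G)
    (hS : IsCutSide G x y S) : ∃ z ∉ S, G.IsSimplicialVertex z := by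
  obtain ⟨z, hz : z ∉ S, hmax⟩ :=
    Set.exists_max_image Sᶜ (G.dist x) (Set.toFinite _) ⟨y, hS.right_notMem⟩
  refine ⟨z, hz, hG.isSimplicialVertex_of_forall_adj_dist_le (r := x) fun u hzu => ?_⟩
  by_cases hu : u ∈ S
  · rw [(hS.eq_of_adj hu hz hzu.symm).1, dist_self]
    exact Nat.zero_le _
  · exact hmax u hu

lemma IsThickLeaved.exists_isSimplicialVertex_forall_mem_edges [Finite V] (hG : IsThickLeaved G)
    {e : Sym2 V} (he : G.IsBridge e) (r : V) :
    ∃ z, G.IsSimplicialVertex z ∧ ∀ p : G.Walk r z, e ∈ p.edges := by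
  induction e using Sym2.ind with
  | _ x y =>
    obtain ⟨S, hS⟩ := isBridge_iff_exists_isCutSide.1 he
    by_cases hr : r ∈ S
    · obtain ⟨z, hzS, hz⟩ := hG.exists_isSimplicialVertex_notMem hS
      exact ⟨z, hz, hS.mem_edges hr hzS⟩
    · obtain ⟨z, hzS, hz⟩ := hG.exists_isSimplicialVertex_notMem hS.compl
      exact ⟨z, hz, fun p => Sym2.eq_swap ▸ hS.compl.mem_edges hr hzS p⟩

lemma IsThickLeaved.isBridge_of_notMem_simplicialEdges (hG : IsThickLeaved G) {e : Sym2 V}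
    (he : e ∈ G.edgeSet) (hes : e ∉ simplicialEdges G) : G.IsBridge e := by
  induction e using Sym2.ind with
  | _ x y =>
    exact hG.isBridge he (fun hx => hes ⟨he, x, Sym2.mem_mk_left x y, hx⟩)
      fun hy => hes ⟨he, y, Sym2.mem_mk_right x y, hy⟩

/-- The last edge `wz` of a shortest path from a sparse root `r` to a simplicial vertex `z` beyond
the bridge `e` is not in `X`, because `e` is the only edge of `X` on that path. -/
lemma IsThickLeaved.exists_mem_simplicialEdges_sdiff [Finite V] (hG : IsThickLeaved G)
    (hr : IsSparseRoot G X r) {e : Sym2 V} (heX : e ∈ X) (heG : e ∈ G.edgeSet)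
    (hes : e ∉ simplicialEdges G) :
    ∃ w z, s(w, z) ∈ simplicialEdges G \ X ∧ G.dist r z = G.dist r w + 1 ∧
      ∀ p : G.Walk r z, e ∈ p.edges := by
  obtain ⟨z, hz, hez⟩ := hG.exists_isSimplicialVertex_forall_mem_edges
    (hG.isBridge_of_notMem_simplicialEdges heG hes) r
  have hrz : r ≠ z := by
    rintro rfl
    exact absurd (hez .nil) (by simp)
  obtain ⟨w, hwz, hw⟩ := exists_adj_dist_eq_add_one hG.connected hrz
  obtain ⟨p, hp⟩ := hG.connected.exists_walk_length_eq_dist r w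
  have hmem : s(w, z) ∈ simplicialEdges G := ⟨hwz, z, Sym2.mem_mk_right w z, hz⟩
  refine ⟨w, z, ⟨hmem, fun hX => hes ?_⟩, hw, hez⟩
  have hlen : (p.concat hwz).length = G.dist r z := by rw [Walk.length_concat, hp, hw]
  exact hr _ hlen ⟨heX, hez _⟩ ⟨hX, by simp⟩ ▸ hmem

lemma IsThickLeaved.ncard_sdiff_le [Finite V] (hG : IsThickLeaved G) (hX : X ⊆ G.edgeSet)
    (hr : IsSparseRoot G X r) :
    (X \ simplicialEdges G).ncard ≤ (simplicialEdges G \ X).ncard := by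
  have : Nonempty V := ⟨r⟩
  have hlast : ∀ e ∈ X \ simplicialEdges G, ∃ w z, s(w, z) ∈ simplicialEdges G \ X ∧
      G.dist r z = G.dist r w + 1 ∧ ∀ p : G.Walk r z, e ∈ p.edges :=
    fun e he => hG.exists_mem_simplicialEdges_sdiff hr he.1 (hX he.1) he.2
  choose! w z hmem hdist hsep using hlast
  refine Set.ncard_le_ncard_of_injOn (fun e => s(w e, z e)) hmem fun e he f hf hef => ?_
  have hz : z e = z f := by
    rcases Sym2.eq_iff.1 hef with ⟨-, h⟩ | ⟨hwz, hzw⟩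
    · exact h
    · have he := hdist e he
      have hf := hdist f hf
      rw [hwz, hzw] at he
      omega
  obtain ⟨p, hp⟩ := hG.connected.exists_walk_length_eq_dist r (z e)
  exact hr p hp ⟨he.1, hsep e he p⟩ ⟨hf.1, (hz ▸ hsep f hf) p⟩

lemma IsThickLeaved.ncard_le [Finite V] (hG : IsThickLeaved G) (hX : G.IsEdgeGPSet X) :
    X.ncard ≤ (simplicialEdges G).ncard := by
  by_cases hsub : X ⊆ simplicialEdges G
  · exact Set.ncard_le_ncard hsub
  obtain ⟨e, heX, hes⟩ := Set.not_subset.1 hsub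
  have hbridge := hG.isBridge_of_notMem_simplicialEdges (hX.1 heX) hes
  induction e using Sym2.ind with
  | _ x y =>
    obtain ⟨S, hS⟩ := isBridge_iff_exists_isCutSide.1 hbridge
    obtain ⟨r, hr⟩ := hS.exists_isSparseRoot hG.connected hX heX
    exact (Set.ncard_le_ncard_iff_ncard_sdiff_le_ncard_sdiff).2 (hG.ncard_sdiff_le hX.1 hr)

lemma IsThickLeaved.egp_eq_ncard_simplicialEdges [Finite V] (hG : IsThickLeaved G) :
    G.egp = (simplicialEdges G).ncard := by
  refine IsGreatest.csSup_eq ⟨⟨_, isEdgeGPSet_simplicialEdges hG.connected, rfl⟩, ?_⟩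
  rintro _ ⟨X, hX, rfl⟩
  exact hG.ncard_le hX

end UpperBound

end ThickLeaved

theorem egp_thickLeavedTree_general {V : Type} [Finite V] {G : SimpleGraph V}
    (hG : ThickLeaved.IsThickLeaved G) :
    G.egp = ∑ᶠ B ∈ simplicialBlocks G, (Set.ncard B).choose 2 := by
  rw [hG.egp_eq_ncard_simplicialEdges, hG.ncard_simplicialEdges]

/-- If `G` is a thick-leaved tree with simplicial blocks `B₁, …, B_k`, then
`gp_e(G) = Σᵢ C(n(Bᵢ), 2)`. -/
theorem egp_thickLeavedTree {V : Type} [Fintype V] (G : SimpleGraph V)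
    (h : IsThickLeavedTree G) :
    G.egp = ∑ᶠ B ∈ simplicialBlocks G, (Set.ncard B).choose 2 := by
  exact egp_thickLeavedTree_general h.isThickLeaved
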